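/- The functional 𝓡_{ψ,κ,P} : L²(P) → ℝ is lower semicontinuous with respect to the weak topology of L²(P) and strictly convex, in the sense that whenever h₀, h₁ ∈ L²(P) satisfy P(h₀ ≠ h₁) > 0 one has (𝓡_{ψ,κ,P}(h₀) + 𝓡_{ψ,κ,P}(h₁))/2 > 𝓡_{ψ,κ,P}((h₀ + h₁)/2). Consequently, the minimum of 𝓡_{ψ,κ,P} over the closed unit ball {h ∈ L²(P) : ‖h‖_P ≤ 1} is attained at a function h* which is unique up to P-null sets. -/

import Mathlib

open MeasureTheory ProbabilityTheory Real Filter Set Topology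

noncomputable section

namespace MaxMargin

/-- The standard Gaussian measure on `ℝ`. -/
def stdG : Measure ℝ := gaussianReal 0 1

/-- The function `F_κ(c₁,c₂) = (E[((κ − c₁·Y·G − c₂·Z)₊)²])^{1/2}` where `G, Z` are independent
standard Gaussians and, conditionally on `G`, `Y ∈ {+1,−1}` with `P(Y = +1 | G) = f(G)`. -/
def Fk (f : ℝ → ℝ) (κ c₁ c₂ : ℝ) : ℝ :=
  Real.sqrt (∫ g, ∫ z,
    (f g * (max (κ - c₁ * g - c₂ * z) 0) ^ 2
      + (1 - f g) * (max (κ + c₁ * g - c₂ * z) 0) ^ 2) ∂stdG ∂stdG)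

/-- Non-degeneracy of `f`: the variable `T = Y·G` satisfies `P(T < x) > 0` and `P(T > x) > 0`
for every `x ∈ ℝ`. -/
def NonDeg (f : ℝ → ℝ) : Prop :=
  ∀ x : ℝ,
    (0 < ∫ g, (f g * (if g < x then (1:ℝ) else 0)
          + (1 - f g) * (if -g < x then (1:ℝ) else 0)) ∂stdG) ∧
    (0 < ∫ g, (f g * (if x < g then (1:ℝ) else 0)
          + (1 - f g) * (if x < -g then (1:ℝ) else 0)) ∂stdG)


/-- Points of `ℝ³` carrying the coordinates `(G, X, W)`. -/
abbrev Pt : Type := ℝ × ℝ × ℝ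

/-- First coordinate `G`. -/
def Gc : Pt → ℝ := fun q => q.1

/-- Second coordinate `X`. -/
def Xc : Pt → ℝ := fun q => q.2.1

/-- Third coordinate `W`. -/
def Wc : Pt → ℝ := fun q => q.2.2

/-- The inner product `⟨h₁,h₂⟩_P = E_P[h₁h₂]`. -/
def ip (P : Measure Pt) (h₁ h₂ : Pt → ℝ) : ℝ := ∫ q, h₁ q * h₂ q ∂P

/-- The norm `‖h‖_P = ⟨h,h⟩_P^{1/2}`. -/
def pnorm (P : Measure Pt) (h : Pt → ℝ) : ℝ := Real.sqrt (ip P h h)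

/-- Projection onto the orthogonal complement of `W`: `Π_{W⊥}(h) = h − ⟨h,W⟩_P·W`. -/
def projW (P : Measure Pt) (h : Pt → ℝ) : Pt → ℝ := fun q => h q - ip P h Wc * Wc q

/-- Partial derivative of `F_κ` in its first argument. -/
def d1F (f : ℝ → ℝ) (κ c₁ c₂ : ℝ) : ℝ := deriv (fun t => Fk f κ t c₂) c₁

/-- Partial derivative of `F_κ` in its second argument. -/
def d2F (f : ℝ → ℝ) (κ c₁ c₂ : ℝ) : ℝ := deriv (fun t => Fk f κ c₁ t) c₂

/-- `ψ*(0) = min_{c ∈ ℝ} F₀(c,1)²`. -/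
def psiStar0 (f : ℝ → ℝ) : ℝ := ⨅ c : ℝ, (Fk f 0 c 1) ^ 2

/-- The functional `𝓡_{ψ,κ,P}(h) = ψ^{−1/2}·F_κ(⟨h, X^{1/2}W⟩_P, ‖Π_{W⊥}(X^{1/2}h)‖_P)
+ ⟨h, X^{1/2}·Π_{W⊥}(G)⟩_P`. -/
def Rfun (f : ℝ → ℝ) (P : Measure Pt) (ψ κ : ℝ) (h : Pt → ℝ) : ℝ :=
  (Real.sqrt ψ)⁻¹ *
      Fk f κ (ip P h (fun q => Real.sqrt (Xc q) * Wc q))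
        (pnorm P (projW P (fun q => Real.sqrt (Xc q) * h q)))
    + ip P h (fun q => Real.sqrt (Xc q) * projW P Gc q)

/-- `ζ(P) = ‖X^{−1/2}W‖_P^{−1}`. -/
def zetaP (P : Measure Pt) : ℝ := (pnorm P (fun q => (Real.sqrt (Xc q))⁻¹ * Wc q))⁻¹

section Abstract

variable {H : Type*} [NormedAddCommGroup H] [InnerProductSpace ℝ H]

lemma weak_lsc (R : H → ℝ) (hc : Continuous R) (hconv : ConvexOn ℝ univ R) :
    LowerSemicontinuous (fun h : WeakSpace ℝ H => R ((toWeakSpace ℝ H).symm h)) := by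
  rw [lowerSemicontinuous_iff_isClosed_preimage]
  intro y
  have hs : Convex ℝ {x | R x ≤ y} := by
    simpa using hconv.convex_le y
  have hcl : IsClosed {x | R x ≤ y} := isClosed_le hc continuous_const
  have := hs.toWeakSpace_closure ℝ
  rw [hcl.closure_eq] at this
  have h2 : (fun h : WeakSpace ℝ H => R ((toWeakSpace ℝ H).symm h)) ⁻¹' Iic y
      = (toWeakSpace ℝ H) '' {x | R x ≤ y} := by
    ext z
    constructor
    · intro hz
      exact ⟨(toWeakSpace ℝ H).symm z, hz, by simp⟩
    · rintro ⟨x, hx, rfl⟩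
      simpa using hx
  rw [h2, this]
  exact isClosed_closure

lemma weak_min [CompleteSpace H] (R : H → ℝ) (hc : Continuous R) (hconv : ConvexOn ℝ univ R) :
    ∃ hs : H, ‖hs‖ ≤ 1 ∧ ∀ h, ‖h‖ ≤ 1 → R hs ≤ R h := by
  let φ : WeakDual ℝ H → WeakSpace ℝ H := fun x =>
    toWeakSpace ℝ H ((InnerProductSpace.toDual ℝ H).symm (WeakDual.toStrongDual x))
  have hφ : Continuous φ := by
    apply WeakBilin.continuous_of_continuous_eval
    intro y
    have : (fun a => ((topDualPairing ℝ H).flip (φ a)) y)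
        = fun a : WeakDual ℝ H => a ((InnerProductSpace.toDual ℝ H).symm y) := by
      funext a
      change y ((InnerProductSpace.toDual ℝ H).symm (WeakDual.toStrongDual a)) = _
      rw [← InnerProductSpace.toDual_symm_apply (y := y), real_inner_comm,
        InnerProductSpace.toDual_symm_apply]
      rfl
    change Continuous (fun a => ((topDualPairing ℝ H).flip (φ a)) y)
    rw [this]
    exact WeakDual.eval_continuous _
  have hl : LowerSemicontinuous (fun x : WeakDual ℝ H => 
      R ((InnerProductSpace.toDual ℝ H).symm (WeakDual.toStrongDual x))) :=
    (weak_lsc R hc hconv).comp hφ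
  have hK := WeakDual.isCompact_closedBall (0 : StrongDual ℝ H) 1
  have hne : (WeakDual.toStrongDual ⁻¹' Metric.closedBall (0 : StrongDual ℝ H) 1).Nonempty :=
    ⟨0, by simp⟩
  obtain ⟨x, hx, hmin⟩ := (hl.lowerSemicontinuousOn _).exists_isMinOn hne hK
  refine ⟨(InnerProductSpace.toDual ℝ H).symm (WeakDual.toStrongDual x), ?_, ?_⟩
  · simpa using hx
  · intro h hh
    have := hmin (a := StrongDual.toWeakDual (InnerProductSpace.toDual ℝ H h)) (by simpa using hh)
    simpa using this

/-- The abstract functional. -/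
lemma abs_strict (F : ℝ × ℝ → ℝ) (hF : StrictConvexOn ℝ univ F)
    (heven : ∀ a b, F (a, -b) = F (a, b)) (w k : H) (s : ℝ) (hs : 0 < s) :
    StrictConvexOn ℝ univ (fun y : H =>
      s * F (inner ℝ y w, ‖y - (inner ℝ y w : ℝ) • w‖) + inner ℝ y k) := by
  have hmono : ∀ a b b', 0 ≤ b → b < b' → F (a, b) < F (a, b') := by
    intro a b b' hb hbb
    have hb' : 0 < b' := by linarith
    have hne : ((a, b') : ℝ × ℝ) ≠ (a, -b') := by
      intro h
      have := (Prod.ext_iff.1 h).2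
      simp only at this
      linarith
    have h := hF.2 (mem_univ _) (mem_univ _) hne
      (show 0 < (b' + b) / (2 * b') by positivity)
      (show 0 < (b' - b) / (2 * b') from div_pos (by linarith) (by positivity))
      (by field_simp; ring)
    rw [heven] at h
    have e : ((b' + b) / (2 * b')) • ((a, b') : ℝ × ℝ) + ((b' - b) / (2 * b')) • (a, -b')
        = (a, b) := by
      ext
      · simp; field_simp; ring
      · simp; field_simp; ring
    rw [e] at h
    have e2 : ((b' + b) / (2 * b')) • F (a, b') + ((b' - b) / (2 * b')) • F (a, b')
        = F (a, b') := by
      simp only [smul_eq_mul]; field_simp; ring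
    rwa [e2] at h
  have hmono' : ∀ a b b', 0 ≤ b → b ≤ b' → F (a, b) ≤ F (a, b') := by
    intro a b b' hb hbb
    rcases hbb.eq_or_lt with rfl | h
    · exact le_rfl
    · exact (hmono _ _ _ hb h).le
  refine ⟨convex_univ, ?_⟩
  intro x _ y _ hxy a b ha hb hab
  set c : H → ℝ := fun y => inner ℝ y w with hc
  set v : H → H := fun y => y - (inner ℝ y w : ℝ) • w with hv
  have cl : c (a • x + b • y) = a * c x + b * c y := by
    simp [hc, inner_add_left, inner_smul_left]
  have vl : v (a • x + b • y) = a • v x + b • v y := by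
    have := cl
    simp only [hc] at this
    simp only [hv, this]
    module
  have kl : (inner ℝ (a • x + b • y) k : ℝ) = a * inner ℝ x k + b * inner ℝ y k := by
    simp [inner_add_left, inner_smul_left]
  have nle : ‖a • v x + b • v y‖ ≤ a * ‖v x‖ + b * ‖v y‖ := by
    refine (norm_add_le _ _).trans (le_of_eq ?_)
    simp [norm_smul, abs_of_pos ha, abs_of_pos hb]
  have key : F (c (a • x + b • y), ‖v (a • x + b • y)‖)
      < a * F (c x, ‖v x‖) + b * F (c y, ‖v y‖) := by
    rw [cl, vl]
    by_cases hcase : ((c x, ‖v x‖) : ℝ × ℝ) = (c y, ‖v y‖)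
    · obtain ⟨h1, h2⟩ := Prod.ext_iff.1 hcase
      simp only at h1 h2
      have hvne : v x ≠ v y := by
        intro h
        apply hxy
        simp only [hv] at h
        simp only [hc] at h1
        rw [h1] at h
        exact sub_left_inj.1 h
      have hlt : ‖a • v x + b • v y‖ < ‖v y‖ :=
        norm_combo_lt_of_ne h2.le le_rfl hvne ha hb hab
      have e : a * c x + b * c y = c y := by rw [h1, ← add_mul, hab, one_mul]
      rw [e, h1, h2, ← add_mul, hab, one_mul]
      exact hmono _ _ _ (norm_nonneg _) hlt
    · have h := hF.2 (mem_univ _) (mem_univ _) hcase ha hb hab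
      refine lt_of_le_of_lt (hmono' _ _ _ (norm_nonneg _) nle) ?_
      simpa using h
  have := mul_lt_mul_of_pos_left key hs
  simp only [smul_eq_mul]
  change s * F (c (a • x + b • y), ‖v (a • x + b • y)‖) + _ < 
    a * (s * F (c x, ‖v x‖) + _) + b * (s * F (c y, ‖v y‖) + _)
  rw [kl]
  linarith

end Abstract

section Gauss

instance : IsProbabilityMeasure stdG := by unfold stdG; infer_instance

instance : stdG.IsOpenPosMeasure :=
  (gaussianReal_absolutelyContinuous' 0 one_ne_zero).isOpenPosMeasure

lemma stdG_neg : MeasurePreserving (fun x : ℝ => -x) stdG stdG :=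
  ⟨measurable_neg, by unfold stdG; rw [gaussianReal_map_neg]; simp⟩

/-- Product Gaussian. -/
def gam : Measure (ℝ × ℝ) := stdG.prod stdG

instance : IsProbabilityMeasure gam := by unfold gam; infer_instance

instance : gam.IsOpenPosMeasure := by unfold gam; infer_instance

/-- Flip of the first coordinate. -/
def flip1 : ℝ × ℝ → ℝ × ℝ := fun p => (-p.1, p.2)

lemma flip1_meas : Measurable flip1 := by unfold flip1; fun_prop

lemma flip1_cont : Continuous flip1 := by unfold flip1; fun_prop

lemma flip1_mp : MeasurePreserving flip1 gam gam :=
  stdG_neg.prod (MeasurePreserving.id stdG)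

/-- Law of `(Y G, Z)`. -/
def muF (f : ℝ → ℝ) : Measure (ℝ × ℝ) :=
  gam.withDensity (fun p => ENNReal.ofReal (f p.1))
    + (gam.withDensity (fun p => ENNReal.ofReal (1 - f p.1))).map flip1

variable {f : ℝ → ℝ} (hf : Continuous f) (hf01 : ∀ x, f x ∈ Set.Icc (0:ℝ) 1)

lemma muF_le (hf01 : ∀ x, f x ∈ Set.Icc (0:ℝ) 1) : muF f ≤ (2 : ENNReal) • gam := by
  rw [two_smul]
  have key : ∀ g : ℝ × ℝ → ENNReal, (∀ x, g x ≤ 1) → gam.withDensity g ≤ gam := by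
    intro g hg
    calc gam.withDensity g ≤ gam.withDensity 1 :=
          withDensity_mono (Eventually.of_forall hg)
      _ = gam := withDensity_one
  refine add_le_add (key _ ?_) ?_
  · intro x
    simpa using (hf01 x.1).2
  · calc _ ≤ gam.map flip1 := Measure.map_mono (key _ (fun x => by
            simpa using (hf01 x.1).1)) flip1_meas
      _ = gam := flip1_mp.map_eq

lemma muF_memLp (hf01 : ∀ x, f x ∈ Set.Icc (0:ℝ) 1) {u : ℝ × ℝ → ℝ} (hu : MemLp u 2 gam) :
    MemLp u 2 (muF f) :=
  hu.of_measure_le_smul (by simp) (muF_le hf01)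

lemma muF_integral (hf : Continuous f) (hf01 : ∀ x, f x ∈ Set.Icc (0:ℝ) 1) {h : ℝ × ℝ → ℝ} (hc : Continuous h) (hi : Integrable h gam) :
    ∫ p, h p ∂(muF f) = ∫ g, ∫ z, (f g * h (g, z) + (1 - f g) * h (-g, z)) ∂stdG ∂stdG := by
  have hi2 : Integrable (fun p => h (flip1 p)) gam := flip1_mp.integrable_comp_of_integrable hi
  have m1 : Measurable (fun p : ℝ × ℝ => ENNReal.ofReal (f p.1)) := by fun_prop
  have m2 : Measurable (fun p : ℝ × ℝ => ENNReal.ofReal (1 - f p.1)) := by fun_prop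
  have j1 : Integrable (fun p => f p.1 * h p) gam := by
    refine hi.bdd_mul (c := 1) (by fun_prop) (Eventually.of_forall fun p => ?_)
    rw [Real.norm_eq_abs, abs_le]
    constructor <;> linarith [(hf01 p.1).1, (hf01 p.1).2]
  have j2 : Integrable (fun p => (1 - f p.1) * h (flip1 p)) gam := by
    refine hi2.bdd_mul (c := 1) (by fun_prop) (Eventually.of_forall fun p => ?_)
    rw [Real.norm_eq_abs, abs_le]
    constructor <;> linarith [(hf01 p.1).1, (hf01 p.1).2]
  have hle := muF_le hf01
  have hI : Integrable h (muF f) := hi.of_measure_le_smul (by simp) hle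
  have e1 : ∀ p : ℝ × ℝ, (ENNReal.ofReal (f p.1)).toReal = f p.1 :=
    fun p => ENNReal.toReal_ofReal (hf01 p.1).1
  have e2 : ∀ p : ℝ × ℝ, (ENNReal.ofReal (1 - f p.1)).toReal = 1 - f p.1 :=
    fun p => ENNReal.toReal_ofReal (by linarith [(hf01 p.1).2])
  unfold muF at hI ⊢
  rw [integral_add_measure hI.left_of_add_measure hI.right_of_add_measure,
    integral_map flip1_meas.aemeasurable hc.aestronglyMeasurable,
    integral_withDensity_eq_integral_toReal_smul m1 (by simp),
    integral_withDensity_eq_integral_toReal_smul m2 (by simp)]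
  simp only [e1, e2, smul_eq_mul]
  rw [← integral_add j1 j2]
  have := integral_prod _ (j1.add j2)
  exact this

lemma memLp_fst : MemLp (fun p : ℝ × ℝ => p.1) 2 gam :=
  (memLp_id_gaussianReal' 2 (by simp)).comp_fst stdG

lemma memLp_snd : MemLp (fun p : ℝ × ℝ => p.2) 2 gam :=
  (memLp_id_gaussianReal' 2 (by simp)).comp_snd stdG

/-- Affine function. -/
def aff (κ : ℝ) (c : ℝ × ℝ) : ℝ × ℝ → ℝ := fun p => κ - c.1 * p.1 - c.2 * p.2

lemma aff_memLp (κ : ℝ) (c : ℝ × ℝ) : MemLp (aff κ c) 2 gam :=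
  ((memLp_const κ).sub (memLp_fst.const_mul c.1)).sub (memLp_snd.const_mul c.2)

lemma aff_cont (κ : ℝ) (c : ℝ × ℝ) : Continuous (aff κ c) := by unfold aff; fun_prop

/-- Affine function as an element of `L²`. -/
def affL (hf01 : ∀ x, f x ∈ Set.Icc (0:ℝ) 1) (κ : ℝ) (c : ℝ × ℝ) : Lp ℝ 2 (muF f) :=
  (muF_memLp hf01 (aff_memLp κ c)).toLp _

lemma affL_coe (κ : ℝ) (c : ℝ × ℝ) :
    ((affL hf01 κ c ⊔ 0 : Lp ℝ 2 (muF f)) : ℝ × ℝ → ℝ) =ᵐ[muF f] fun p => max (aff κ c p) 0 := by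
  filter_upwards [Lp.coeFn_sup (affL hf01 κ c) 0, Lp.coeFn_zero ℝ 2 (muF f),
    (muF_memLp hf01 (aff_memLp κ c)).coeFn_toLp] with p h1 h2 h3
  rw [h1, Pi.sup_apply, h2]
  unfold affL
  rw [h3]
  rfl

lemma norm_eq_sqrt {α : Type*} [MeasurableSpace α] {μ : Measure α} (x : Lp ℝ 2 μ) :
    ‖x‖ = Real.sqrt (∫ a, x a * x a ∂μ) := by
  rw [norm_eq_sqrt_real_inner, L2.inner_def]
  simp [← sq]

lemma Fk_eq (hf : Continuous f) (hf01 : ∀ x, f x ∈ Set.Icc (0:ℝ) 1) (κ : ℝ) (c : ℝ × ℝ) :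
    Fk f κ c.1 c.2 = ‖affL hf01 κ c ⊔ 0‖ := by
  rw [norm_eq_sqrt]
  have h1 : ∫ a, (affL hf01 κ c ⊔ 0 : Lp ℝ 2 (muF f)) a * (affL hf01 κ c ⊔ 0 : Lp ℝ 2 (muF f)) a
      ∂(muF f) = ∫ a, (max (aff κ c a) 0) ^ 2 ∂(muF f) := by
    apply integral_congr_ae
    filter_upwards [affL_coe hf01 κ c] with p hp
    rw [hp, sq]
  have hpos : MemLp (fun a => max (aff κ c a) 0) 2 gam := (aff_memLp κ c).pos_part
  rw [h1, muF_integral hf hf01 (by have := aff_cont κ c; fun_prop) hpos.integrable_sq]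
  unfold Fk aff
  simp

lemma affL_comb (κ : ℝ) (c d : ℝ × ℝ) (a b : ℝ) (hab : a + b = 1) :
    affL hf01 κ (a • c + b • d) = a • affL hf01 κ c + b • affL hf01 κ d := by
  unfold affL
  rw [← MemLp.toLp_const_smul, ← MemLp.toLp_const_smul, ← MemLp.toLp_add]
  congr 1
  funext p
  simp only [aff, Pi.add_apply, Pi.smul_apply, smul_eq_mul, Prod.fst_add, Prod.snd_add,
    Prod.smul_fst, Prod.smul_snd]
  linear_combination (-κ) * hab

lemma ev_of_ae (hf : Continuous f) (hf01 : ∀ x, f x ∈ Set.Icc (0:ℝ) 1)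
    {u v : ℝ × ℝ → ℝ} (hu : Continuous u) (hv : Continuous v)
    (h : u =ᵐ[muF f] v) : u =ᶠ[𝓝 (0, 0)] v := by
  have m1 : Measurable (fun p : ℝ × ℝ => ENNReal.ofReal (f p.1)) := by fun_prop
  have m2 : Measurable (fun p : ℝ × ℝ => ENNReal.ofReal (1 - f p.1)) := by fun_prop
  have h' : ∀ᵐ p ∂(muF f), u p = v p := h
  unfold muF at h'
  rw [ae_add_measure_iff] at h'
  obtain ⟨ha, hb⟩ := h'
  rw [ae_withDensity_iff m1] at ha
  have hb := ae_of_ae_map flip1_meas.aemeasurable hb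
  rw [ae_withDensity_iff m2] at hb
  rcases (hf01 0).1.eq_or_lt with h0 | h0
  · have hU : IsOpen {p : ℝ × ℝ | f p.1 < 1} := isOpen_lt (by fun_prop) continuous_const
    have := Measure.eqOn_open_of_ae_eq (μ := gam) (f := u ∘ flip1) (g := v ∘ flip1)
      (U := {p : ℝ × ℝ | f p.1 < 1}) (by
        rw [Filter.EventuallyEq, ae_restrict_iff' hU.measurableSet]
        filter_upwards [hb] with p hp hpU
        apply hp
        simpa using hpU) hU
      (hu.comp flip1_cont).continuousOn (hv.comp flip1_cont).continuousOn
    have hmem : flip1 ⁻¹' {p : ℝ × ℝ | f p.1 < 1} ∈ 𝓝 ((0, 0) : ℝ × ℝ) := by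
      apply (hU.preimage flip1_cont).mem_nhds
      simp [flip1, ← h0]
    filter_upwards [hmem] with p hp
    have := this hp
    simpa [flip1] using this
  · have hU : IsOpen {p : ℝ × ℝ | 0 < f p.1} := isOpen_lt continuous_const (by fun_prop)
    have := Measure.eqOn_open_of_ae_eq (μ := gam) (f := u) (g := v)
      (U := {p : ℝ × ℝ | 0 < f p.1}) (by
        rw [Filter.EventuallyEq, ae_restrict_iff' hU.measurableSet]
        filter_upwards [ha] with p hp hpU
        apply hp
        simpa using hpU) hU
      hu.continuousOn hv.continuousOn
    filter_upwards [hU.mem_nhds (show ((0, 0) : ℝ × ℝ) ∈ {p : ℝ × ℝ | 0 < f p.1} from h0)]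
      with p hp using this hp

lemma aff_pos_ne (hf : Continuous f) {κ : ℝ} (hκ : 0 < κ) (c : ℝ × ℝ) :
    affL hf01 κ c ⊔ 0 ≠ 0 := by
  intro h
  have h1 := affL_coe hf01 κ c
  rw [h] at h1
  have h2 : (fun p => max (aff κ c p) 0) =ᵐ[muF f] fun _ => (0:ℝ) :=
    h1.symm.trans (Lp.coeFn_zero ℝ 2 (muF f))
  have h3 := (ev_of_ae hf hf01 (by have := aff_cont κ c; fun_prop) continuous_const h2).eq_of_nhds
  simp [aff] at h3
  linarith

lemma aff_inj {κ : ℝ} (hκ : 0 < κ) (c d : ℝ × ℝ) (r s : ℝ) (hr : 0 < r)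
    (h : (fun p => r * max (aff κ c p) 0) =ᶠ[𝓝 (0, 0)] (fun p => s * max (aff κ d p) 0)) :
    c = d := by
  have h0 := h.eq_of_nhds
  have hrs : r = s := by
    simp [aff, hκ.le] at h0
    rcases h0 with h0 | h0
    · exact h0
    · linarith
  subst hrs
  have p1 : ∀ c : ℝ × ℝ, ∀ᶠ p in 𝓝 ((0, 0) : ℝ × ℝ), 0 < aff κ c p := fun c =>
    (aff_cont κ c).continuousAt.eventually_const_lt (by simpa [aff] using hκ)
  have h2 : ∀ᶠ p : ℝ × ℝ in 𝓝 (0, 0), (c.1 - d.1) * p.1 + (c.2 - d.2) * p.2 = 0 := by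
    filter_upwards [h, p1 c, p1 d] with p e1 e2 e3
    rw [max_eq_left e2.le, max_eq_left e3.le] at e1
    have := mul_left_cancel₀ hr.ne' e1
    simp only [aff] at this
    linarith
  have t : ∀ v : ℝ × ℝ, ∃ e : ℝ, 0 < e ∧ (c.1 - d.1) * (e * v.1) + (c.2 - d.2) * (e * v.2) = 0 := by
    intro v
    have ht : Tendsto (fun e : ℝ => ((e * v.1, e * v.2) : ℝ × ℝ)) (𝓝[>] 0) (𝓝 (0, 0)) := by
      have : Continuous (fun e : ℝ => ((e * v.1, e * v.2) : ℝ × ℝ)) := by fun_prop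
      have := this.tendsto 0
      simp only [zero_mul] at this
      exact this.mono_left nhdsWithin_le_nhds
    obtain ⟨e, he1, he2⟩ := ((ht.eventually h2).and self_mem_nhdsWithin).exists
    exact ⟨e, he2, he1⟩
  obtain ⟨e, he, h3⟩ := t (1, 0)
  obtain ⟨e', he', h4⟩ := t (0, 1)
  simp [he.ne'] at h3
  simp [he'.ne'] at h4
  ext
  · linarith
  · linarith

lemma Fk_strict (hf : Continuous f) (hf01 : ∀ x, f x ∈ Set.Icc (0:ℝ) 1) {κ : ℝ} (hκ : 0 < κ) :
    StrictConvexOn ℝ univ (fun c : ℝ × ℝ => Fk f κ c.1 c.2) := by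
  refine ⟨convex_univ, ?_⟩
  intro c _ d _ hcd a b ha hb hab
  simp only [Fk_eq hf hf01]
  rw [affL_comb hf01 κ c d a b hab]
  set x := affL hf01 κ c
  set y := affL hf01 κ d
  have h1 : ‖(a • x + b • y) ⊔ 0‖ ≤ ‖a • (x ⊔ 0) + b • (y ⊔ 0)‖ := by
    apply Lp.norm_le_norm_of_ae_le
    filter_upwards [Lp.coeFn_sup (a • x + b • y) 0, Lp.coeFn_zero ℝ 2 (muF f),
      Lp.coeFn_add (a • x) (b • y), Lp.coeFn_smul a x, Lp.coeFn_smul b y,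
      Lp.coeFn_add (a • (x ⊔ 0)) (b • (y ⊔ 0)), Lp.coeFn_smul a (x ⊔ 0), Lp.coeFn_smul b (y ⊔ 0),
      Lp.coeFn_sup x 0, Lp.coeFn_sup y 0] with p e1 e2 e3 e4 e5 e6 e7 e8 e9 e10
    simp only [e1, e2, e3, e4, e5, e6, e7, e8, e9, e10, Pi.add_apply, Pi.smul_apply, Pi.sup_apply,
      smul_eq_mul, Pi.zero_apply]
    have n1 : 0 ≤ (x : ℝ × ℝ → ℝ) p ⊔ 0 := le_sup_right
    have n2 : 0 ≤ (y : ℝ × ℝ → ℝ) p ⊔ 0 := le_sup_right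
    have n3 : 0 ≤ a * ((x : ℝ × ℝ → ℝ) p ⊔ 0) := by positivity
    have n4 : 0 ≤ b * ((y : ℝ × ℝ → ℝ) p ⊔ 0) := by positivity
    rw [Real.norm_of_nonneg le_sup_right, Real.norm_of_nonneg (by positivity)]
    apply sup_le
    · have := mul_le_mul_of_nonneg_left (le_sup_left : (x : ℝ × ℝ → ℝ) p ≤ _ ⊔ 0) ha.le
      have := mul_le_mul_of_nonneg_left (le_sup_left : (y : ℝ × ℝ → ℝ) p ≤ _ ⊔ 0) hb.le
      linarith
    · linarith
  refine lt_of_le_of_lt h1 ?_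
  have nx : ‖a • (x ⊔ 0)‖ = a * ‖x ⊔ 0‖ := by rw [norm_smul, Real.norm_of_nonneg ha.le]
  have ny : ‖b • (y ⊔ 0)‖ = b * ‖y ⊔ 0‖ := by rw [norm_smul, Real.norm_of_nonneg hb.le]
  simp only [smul_eq_mul]
  rw [← nx, ← ny]
  apply norm_add_lt_of_not_sameRay
  intro hsr
  obtain ⟨r, s, hr, hs, e⟩ := hsr.exists_pos
    (smul_ne_zero ha.ne' (aff_pos_ne hf01 hf hκ c)) (smul_ne_zero hb.ne' (aff_pos_ne hf01 hf hκ d))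
  rw [smul_smul, smul_smul] at e
  apply hcd
  apply aff_inj hκ c d (r * a) (s * b) (by positivity)
  apply ev_of_ae hf hf01 (by have := aff_cont κ c; fun_prop) (by have := aff_cont κ d; fun_prop)
  have e' : ((r * a) • (x ⊔ 0) : Lp ℝ 2 (muF f)) =ᵐ[muF f] ((s * b) • (y ⊔ 0) : Lp ℝ 2 (muF f)) := by
    rw [e]
  filter_upwards [e', affL_coe hf01 κ c, affL_coe hf01 κ d, Lp.coeFn_smul (r * a) (x ⊔ 0),
    Lp.coeFn_smul (s * b) (y ⊔ 0)] with p g1 g2 g3 g4 g5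
  rw [g4, g5, Pi.smul_apply, Pi.smul_apply, g2, g3] at g1
  simpa using g1

lemma Fk_cont (hf : Continuous f) (hf01 : ∀ x, f x ∈ Set.Icc (0:ℝ) 1) {κ : ℝ} (hκ : 0 < κ) :
    Continuous (fun c : ℝ × ℝ => Fk f κ c.1 c.2) :=
  continuousOn_univ.1 ((Fk_strict hf hf01 hκ).convexOn.continuousOn isOpen_univ)

lemma Fk_even (κ a b : ℝ) : Fk f κ a (-b) = Fk f κ a b := by
  unfold Fk
  congr 1
  apply integral_congr_ae
  refine Eventually.of_forall fun g => ?_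
  have := stdG_neg.integral_comp (MeasurableEquiv.neg ℝ).measurableEmbedding
    (fun z => (f g * (max (κ - a * g - b * z) 0) ^ 2
      + (1 - f g) * (max (κ + a * g - b * z) 0) ^ 2))
  simp only at this ⊢
  rw [← this]
  simp

end Gauss

section Main

variable {P : Measure Pt}

lemma inner_toLp {u v : Pt → ℝ} (hu : MemLp u 2 P) (hv : MemLp v 2 P) :
    (inner ℝ (hu.toLp u) (hv.toLp v) : ℝ) = ip P u v := by
  rw [L2.inner_def]
  unfold ip
  apply integral_congr_ae
  filter_upwards [hu.coeFn_toLp, hv.coeFn_toLp] with q h1 h2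
  rw [h1, h2]
  simp [mul_comm]

lemma norm_toLp' {u : Pt → ℝ} (hu : MemLp u 2 P) : ‖hu.toLp u‖ = pnorm P u := by
  rw [norm_eq_sqrt_real_inner, inner_toLp]
  rfl

lemma sqrtX_meas : Measurable (fun q : Pt => Real.sqrt (Xc q)) := by
  unfold Xc; fun_prop

lemma sqrtX_bound {xmin xmax : ℝ}
    (hX : ∀ᵐ q ∂P, Xc q ∈ Set.Icc xmin xmax) :
    ∀ᵐ q ∂P, ‖Real.sqrt (Xc q)‖ ≤ Real.sqrt xmax := by
  filter_upwards [hX] with q hq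
  rw [Real.norm_of_nonneg (Real.sqrt_nonneg _)]
  exact Real.sqrt_le_sqrt hq.2

lemma mulX_memLp {xmin xmax : ℝ} (hX : ∀ᵐ q ∂P, Xc q ∈ Set.Icc xmin xmax) {u : Pt → ℝ}
    (hu : MemLp u 2 P) : MemLp (fun q => Real.sqrt (Xc q) * u q) 2 P := by
  refine MemLp.of_le_mul (c := Real.sqrt xmax) hu
    (sqrtX_meas.aestronglyMeasurable.mul hu.1) ?_
  filter_upwards [sqrtX_bound hX] with q hq
  rw [norm_mul]
  gcongr

/-- Multiplication by `√X` on `L²(P)`. -/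
def mulX {xmin xmax : ℝ} (hX : ∀ᵐ q ∂P, Xc q ∈ Set.Icc xmin xmax) :
    Lp ℝ 2 P →L[ℝ] Lp ℝ 2 P :=
  LinearMap.mkContinuous
    { toFun := fun h => (mulX_memLp hX (Lp.memLp h)).toLp _
      map_add' := by
        intro x y
        rw [← MemLp.toLp_add]
        apply (MemLp.toLp_eq_toLp_iff _ _).2
        filter_upwards [Lp.coeFn_add x y] with q hq
        simp only [Pi.add_apply, hq]
        ring
      map_smul' := by
        intro a x
        rw [RingHom.id_apply, ← MemLp.toLp_const_smul]
        apply (MemLp.toLp_eq_toLp_iff _ _).2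
        filter_upwards [Lp.coeFn_smul a x] with q hq
        simp only [Pi.smul_apply, hq, smul_eq_mul]
        ring }
    (Real.sqrt xmax) (by
      intro x
      apply Lp.norm_le_mul_norm_of_ae_le_mul
      filter_upwards [(mulX_memLp hX (Lp.memLp x)).coeFn_toLp, sqrtX_bound hX] with q h1 h2
      simp only [LinearMap.coe_mk, AddHom.coe_mk]
      rw [h1, norm_mul]
      gcongr)

lemma mulX_apply {xmin xmax : ℝ} (hX : ∀ᵐ q ∂P, Xc q ∈ Set.Icc xmin xmax) (h : Lp ℝ 2 P) :
    mulX hX h = (mulX_memLp hX (Lp.memLp h)).toLp _ := rfl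

lemma mulX_inj {xmin xmax : ℝ} (hxmin : 0 < xmin) (hX : ∀ᵐ q ∂P, Xc q ∈ Set.Icc xmin xmax) :
    Function.Injective (mulX hX) := by
  intro x y h
  rw [mulX_apply, mulX_apply, MemLp.toLp_eq_toLp_iff] at h
  apply Lp.ext
  filter_upwards [h, hX] with q hq hq2
  exact mul_left_cancel₀ (Real.sqrt_pos.2 (hxmin.trans_le hq2.1)).ne' hq

lemma Rfun_eq {xmin xmax : ℝ} (hX : ∀ᵐ q ∂P, Xc q ∈ Set.Icc xmin xmax)
    (hW : MemLp Wc 2 P) (hK : MemLp (projW P Gc) 2 P) (f : ℝ → ℝ) (ψ κ : ℝ) (h : Lp ℝ 2 P) :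
    Rfun f P ψ κ h = (Real.sqrt ψ)⁻¹ *
      (fun c : ℝ × ℝ => Fk f κ c.1 c.2) (inner ℝ (mulX hX h) (hW.toLp Wc),
        ‖mulX hX h - (inner ℝ (mulX hX h) (hW.toLp Wc) : ℝ) • hW.toLp Wc‖)
      + inner ℝ (mulX hX h) (hK.toLp _) := by
  have hm := mulX_memLp hX (Lp.memLp h)
  have e1 : (inner ℝ (mulX hX h) (hW.toLp Wc) : ℝ) = ip P (fun q => Real.sqrt (Xc q) * h q) Wc :=
    inner_toLp hm hW
  have e2 : (inner ℝ (mulX hX h) (hK.toLp _) : ℝ)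
      = ip P h (fun q => Real.sqrt (Xc q) * projW P Gc q) := by
    rw [mulX_apply, inner_toLp]
    unfold ip
    congr 1
    funext q
    ring
  have e3 : ip P (fun q => Real.sqrt (Xc q) * h q) Wc
      = ip P h (fun q => Real.sqrt (Xc q) * Wc q) := by
    unfold ip
    congr 1
    funext q
    ring
  have e4 : ‖mulX hX h - (inner ℝ (mulX hX h) (hW.toLp Wc) : ℝ) • hW.toLp Wc‖
      = pnorm P (projW P (fun q => Real.sqrt (Xc q) * h q)) := by
    rw [e1, mulX_apply, ← MemLp.toLp_const_smul, ← MemLp.toLp_sub, norm_toLp']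
    rfl
  rw [e4, e2, e1, e3]
  rfl

end Main

/-- The functional `𝓡_{ψ,κ,P}` is lower semicontinuous with respect to the weak topology of
`L²(P)` and strictly convex (in the midpoint sense, for functions differing on a set of positive
measure); consequently its minimum over the closed unit ball of `L²(P)` is attained at a
function `h*` which is unique up to `P`-null sets. -/
theorem statement_2 (f : ℝ → ℝ) (hf : Continuous f) (hf01 : ∀ x, f x ∈ Set.Icc (0:ℝ) 1)
    (hnd : NonDeg f)
    (P : Measure Pt) [IsProbabilityMeasure P]
    (xmin xmax : ℝ) (hxmin : 0 < xmin) (hxx : xmin ≤ xmax)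
    (hG2 : Integrable (fun q => (Gc q) ^ 2) P)
    (hW2 : ∫ q, (Wc q) ^ 2 ∂P = 1)
    (hX : ∀ᵐ q ∂P, Xc q ∈ Set.Icc xmin xmax)
    (ψ κ : ℝ) (hψ : 0 < ψ) (hκ : 0 < κ) :
    LowerSemicontinuous (fun h : WeakSpace ℝ (Lp ℝ 2 P) =>
        Rfun f P ψ κ (show Lp ℝ 2 P from h))
    ∧ (∀ h₀ h₁ : Lp ℝ 2 P, 0 < P {q | h₀ q ≠ h₁ q} →
        Rfun f P ψ κ (((2:ℝ)⁻¹ • (h₀ + h₁) : Lp ℝ 2 P))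
          < (Rfun f P ψ κ h₀ + Rfun f P ψ κ h₁) / 2)
    ∧ (∃ hs : Lp ℝ 2 P, ‖hs‖ ≤ 1
        ∧ (∀ h : Lp ℝ 2 P, ‖h‖ ≤ 1 → Rfun f P ψ κ hs ≤ Rfun f P ψ κ h)
        ∧ (∀ h : Lp ℝ 2 P, ‖h‖ ≤ 1 → Rfun f P ψ κ h = Rfun f P ψ κ hs →
            (h : Pt → ℝ) =ᵐ[P] (hs : Pt → ℝ))) := by
  have hWm : AEStronglyMeasurable Wc P := by
    have : Measurable Wc := by unfold Wc; fun_prop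
    exact this.aestronglyMeasurable
  have hGm : AEStronglyMeasurable Gc P := by
    have : Measurable Gc := by unfold Gc; fun_prop
    exact this.aestronglyMeasurable
  have hW : MemLp Wc 2 P := by
    rw [memLp_two_iff_integrable_sq hWm]
    by_contra hn
    rw [integral_undef hn] at hW2
    exact zero_ne_one hW2
  have hG : MemLp Gc 2 P := (memLp_two_iff_integrable_sq hGm).2 hG2
  have hK : MemLp (projW P Gc) 2 P := hG.sub (hW.const_mul (ip P Gc Wc))
  set R : Lp ℝ 2 P → ℝ := fun h => Rfun f P ψ κ h with hR
  have hs : 0 < (Real.sqrt ψ)⁻¹ := inv_pos.2 (Real.sqrt_pos.2 hψ)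
  have hΦ := abs_strict (fun c : ℝ × ℝ => Fk f κ c.1 c.2) (Fk_strict hf hf01 hκ)
    (fun a b => Fk_even κ a b) (hW.toLp Wc) (hK.toLp _) _ hs
  have hRs : StrictConvexOn ℝ univ R := by
    refine ⟨convex_univ, ?_⟩
    intro x _ y _ hxy a b ha hb hab
    have := hΦ.2 (mem_univ _) (mem_univ _) ((mulX_inj hxmin hX).ne hxy) ha hb hab
    simp only [hR, Rfun_eq hX hW hK, map_add, map_smul]
    exact this
  have hRc : Continuous R := by
    simp only [hR, Rfun_eq hX hW hK]
    have hF := Fk_cont hf hf01 hκ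
    have hA := (mulX hX).continuous
    have hp : Continuous (fun h : Lp ℝ 2 P =>
        ((inner ℝ (mulX hX h) (hW.toLp Wc),
          ‖mulX hX h - (inner ℝ (mulX hX h) (hW.toLp Wc) : ℝ) • hW.toLp Wc‖) : ℝ × ℝ)) := by
      fun_prop
    have hk : Continuous (fun h : Lp ℝ 2 P => (inner ℝ (mulX hX h) (hK.toLp _) : ℝ)) := by
      fun_prop
    exact (continuous_const.mul (hF.comp hp)).add hk
  refine ⟨weak_lsc R hRc hRs.convexOn, ?_, ?_⟩
  · intro h₀ h₁ hne
    have hne' : h₀ ≠ h₁ := by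
      rintro rfl
      simp at hne
    have := hRs.2 (mem_univ h₀) (mem_univ h₁) hne' (show (0:ℝ) < 2⁻¹ by norm_num)
      (show (0:ℝ) < 2⁻¹ by norm_num) (by norm_num)
    rw [← smul_add] at this
    refine this.trans_le (le_of_eq ?_)
    simp only [smul_eq_mul, hR]
    ring
  · obtain ⟨hs', hs1, hmin⟩ := weak_min R hRc hRs.convexOn
    refine ⟨hs', hs1, hmin, ?_⟩
    intro h hh he
    by_contra hcon
    have hne : h ≠ hs' := by
      rintro rfl
      exact hcon (EventuallyEq.refl _ _)
    have h1 := hRs.2 (mem_univ h) (mem_univ hs') hne (show (0:ℝ) < 2⁻¹ by norm_num)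
      (show (0:ℝ) < 2⁻¹ by norm_num) (by norm_num)
    have h2 : ‖(2:ℝ)⁻¹ • h + (2:ℝ)⁻¹ • hs'‖ ≤ 1 := by
      refine (norm_add_le _ _).trans ?_
      rw [norm_smul, norm_smul]
      norm_num
      linarith
    have h3 := hmin _ h2
    have he' : R h = R hs' := he
    rw [he'] at h1
    simp only [smul_eq_mul] at h1
    linarith

end MaxMargin
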